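/- arXiv:1804.07018 — 5 statements merged into one kernel-verified Lean document; each statement's English description precedes it below -/
import Mathlib

section
/- (Uniqueness of the constant equilibrium intensity in Theorem 4.2.) Let μ ∈ ℝ, σ > 0 with 2μ + σ² < 0, and let λ > 0. Set a := λ/(λ − μ) and c := λ/(λ − 2μ − σ²) (both denominators are positive). Then c − a² = (a − 1)² holds if and only if 2μ³ + μ²σ² + σ²λ² = 0, which holds if and only if λ = √(−μ²(2μ + σ²)/σ²). -/
/-!
Since `μ < 0`, both denominators are positive, and over their common denominator
`c - a² - (a - 1)² = (2μ³ + μ²σ² + σ²lam²) / ((lam - μ)² (lam - 2μ - σ²))`,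
so the equilibrium condition is the vanishing of the numerator. That equation is
`lam² = -μ²(2μ + σ²)/σ²`, whose only positive solution is the stated square root.
-/

/-- Uniqueness of the constant equilibrium intensity in Theorem 4.2. For `σ > 0`,
`2μ + σ² < 0` and `lam > 0`, with `a = lam/(lam − μ)` and `c = lam/(lam − 2μ − σ²)`, the
equilibrium condition `c − a² = (a − 1)²` holds iff `2μ³ + μ²σ² + σ²lam² = 0`, which holds
iff `lam = √(−μ²(2μ + σ²)/σ²)`. -/
theorem unique_constant_equilibrium_intensity
    (μ σ lam : ℝ) (hσ : 0 < σ) (hμσ : 2 * μ + σ ^ 2 < 0) (hlam : 0 < lam)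
    (a c : ℝ) (ha : a = lam / (lam - μ)) (hc : c = lam / (lam - 2 * μ - σ ^ 2)) :
    (c - a ^ 2 = (a - 1) ^ 2 ↔ 2 * μ ^ 3 + μ ^ 2 * σ ^ 2 + σ ^ 2 * lam ^ 2 = 0) ∧
      (2 * μ ^ 3 + μ ^ 2 * σ ^ 2 + σ ^ 2 * lam ^ 2 = 0 ↔
        lam = Real.sqrt (-(μ ^ 2) * (2 * μ + σ ^ 2) / σ ^ 2)) := by
  have hσ2 : 0 < σ ^ 2 := by positivity
  have h1 : lam - μ ≠ 0 := by
    have : 0 < lam - μ := by linarith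
    exact this.ne'
  have h2 : lam - 2 * μ - σ ^ 2 ≠ 0 := by
    have : 0 < lam - 2 * μ - σ ^ 2 := by linarith
    exact this.ne'
  constructor
  · -- The cubic is the numerator of `c - a² - (a - 1)²` over the common denominator.
    have key : c - a ^ 2 - (a - 1) ^ 2 =
        (2 * μ ^ 3 + μ ^ 2 * σ ^ 2 + σ ^ 2 * lam ^ 2) /
          ((lam - μ) ^ 2 * (lam - 2 * μ - σ ^ 2)) := by
      rw [ha, hc, eq_div_iff (mul_ne_zero (pow_ne_zero 2 h1) h2)]
      field_simp
      ring
    rw [← sub_eq_zero, key, div_eq_zero_iff]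
    exact or_iff_left (mul_ne_zero (pow_ne_zero 2 h1) h2)
  · -- Positivity of `lam` allows squaring even without knowing the sign of the radicand.
    rw [eq_comm (a := lam), Real.sqrt_eq_iff_mul_self_eq_of_pos hlam, eq_div_iff hσ2.ne']
    constructor <;> intro h <;> linarith
end

section
/- (Inequality (4.22) in the proof of Theorem 4.3.) Let ξ ∈ (0, 1/2], γ > 0 and b = ξ/(γ(1 − ξ)). Then for all x with 0 < x < b, x^{1−ξ}(b^ξ − γb^{1+ξ}) + γb^{2ξ}x^{2−2ξ} ≥ x (real powers). -/
/-!
With weights `w₁ = 1 - γb = (1-2ξ)/(1-ξ)` and `w₂ = γb = ξ/(1-ξ)`, which are nonnegative since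
`ξ ≤ 1/2`, the left-hand side is the weighted arithmetic mean of `b^ξ x^(1-ξ)` and
`b^(2ξ-1) x^(2-2ξ)`. The corresponding geometric mean is exactly `x`, so the claim is the weighted
AM-GM inequality.
-/

/-- Inequality (4.22) in the proof of Theorem 4.3: for `ξ ∈ (0, 1/2]`, `γ > 0` and
`b = ξ/(γ(1 − ξ))`, one has `x^(1−ξ)(b^ξ − γb^(1+ξ)) + γb^(2ξ)x^(2−2ξ) ≥ x`
for all `0 < x < b` (real powers). -/
theorem mean_variance_value_dominates_identity
    (ξ γ b : ℝ) (hξ : ξ ∈ Set.Ioc (0 : ℝ) (1 / 2)) (hγ : 0 < γ)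
    (hb : b = ξ / (γ * (1 - ξ))) :
    ∀ x : ℝ, 0 < x → x < b →
      x ^ (1 - ξ) * (b ^ ξ - γ * b ^ (1 + ξ)) + γ * b ^ (2 * ξ) * x ^ (2 - 2 * ξ) ≥ x := by
  intro x hx hxb
  obtain ⟨h0, h1⟩ := hξ
  have hb0 : 0 < b := hx.trans hxb
  have h1ξ : 0 < 1 - ξ := by linarith
  have hw : γ * b * (1 - ξ) = ξ := by rw [hb]; field_simp
  have hw0 : 0 ≤ γ * b := by positivity
  have hw1 : 0 ≤ 1 - γ * b := by
    by_contra! h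
    nlinarith
  have key := Real.geom_mean_le_arith_mean2_weighted hw1 hw0
    (show 0 ≤ b ^ ξ * x ^ (1 - ξ) by positivity)
    (show 0 ≤ b ^ (2 * ξ - 1) * x ^ (2 - 2 * ξ) by positivity) (by ring)
  have hgeom : (b ^ ξ * x ^ (1 - ξ)) ^ (1 - γ * b) *
      (b ^ (2 * ξ - 1) * x ^ (2 - 2 * ξ)) ^ (γ * b) = x := by
    rw [Real.mul_rpow (by positivity) (by positivity),
      Real.mul_rpow (by positivity) (by positivity), ← Real.rpow_mul hb0.le,
      ← Real.rpow_mul hb0.le, ← Real.rpow_mul hx.le, ← Real.rpow_mul hx.le,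
      mul_mul_mul_comm, ← Real.rpow_add hb0, ← Real.rpow_add hx,
      show ξ * (1 - γ * b) + (2 * ξ - 1) * (γ * b) = 0 by linear_combination -hw,
      show (1 - ξ) * (1 - γ * b) + (2 - 2 * ξ) * (γ * b) = 1 by linear_combination hw,
      Real.rpow_zero, Real.rpow_one, one_mul]
  have e1 : b ^ (1 + ξ) = b * b ^ ξ := by rw [Real.rpow_add hb0, Real.rpow_one]
  have e2 : b ^ (2 * ξ) = b * b ^ (2 * ξ - 1) := by
    rw [Real.rpow_sub_one hb0.ne']; field_simp
  rw [hgeom] at key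
  rw [e1, e2]
  linarith
end

section
/- (Failure of the equilibrium inequality for ξ ∈ (1/2, 1).) Let ξ ∈ (1/2, 1), γ > 0 and b = ξ/(γ(1 − ξ)). Then there exists x with 0 < x < b such that x^{1−ξ}(b^ξ − γb^{1+ξ}) + γb^{2ξ}x^{2−2ξ} < x (real powers). -/
/-! Since `γ b = ξ/(1-ξ) > 1`, the leading coefficient `b^ξ (1 - γ b)` of `V` at `0` is negative.
Factoring, `V(x) = x^(1-ξ) b^ξ (1 - γ b + γ b^ξ x^(1-ξ))`, and the last factor vanishes at
`x = b u^(1/(1-ξ))` with `u = (2ξ-1)/ξ ∈ (0,1)`. At this point `V(x) = 0 < x < b`. -/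

/-- Failure of the equilibrium inequality for `ξ ∈ (1/2, 1)`: with `γ > 0` and
`b = ξ/(γ(1 − ξ))`, there exists `0 < x < b` with
`x^(1−ξ)(b^ξ − γb^(1+ξ)) + γb^(2ξ)x^(2−2ξ) < x` (real powers). -/
theorem mean_variance_value_fails_to_dominate
    (ξ γ b : ℝ) (hξ : ξ ∈ Set.Ioo (1 / 2 : ℝ) 1) (hγ : 0 < γ)
    (hb : b = ξ / (γ * (1 - ξ))) :
    ∃ x : ℝ, 0 < x ∧ x < b ∧
      x ^ (1 - ξ) * (b ^ ξ - γ * b ^ (1 + ξ)) + γ * b ^ (2 * ξ) * x ^ (2 - 2 * ξ) < x := by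
  obtain ⟨h1, h2⟩ := hξ
  have hξ0 : 0 < ξ := by linarith
  have hs : 0 < 1 - ξ := by linarith
  have hb0 : 0 < b := by rw [hb]; positivity
  obtain ⟨u, hu⟩ : ∃ u : ℝ, u = (2 * ξ - 1) / ξ := ⟨_, rfl⟩
  have hu0 : 0 < u := by rw [hu]; exact div_pos (by linarith) hξ0
  have hu1 : u < 1 := by rw [hu, div_lt_one hξ0]; linarith
  have hroot : 1 - γ * b + γ * b * u = 0 := by
    rw [hb, hu]; field_simp; ring
  have hx0 : 0 < b * u ^ (1 / (1 - ξ)) := mul_pos hb0 (Real.rpow_pos_of_pos hu0 _)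
  refine ⟨b * u ^ (1 / (1 - ξ)), hx0, ?_, ?_⟩
  · exact mul_lt_of_lt_one_right hb0 (Real.rpow_lt_one hu0.le hu1 (by positivity))
  · have hpow : (b * u ^ (1 / (1 - ξ))) ^ (1 - ξ) = b ^ (1 - ξ) * u := by
      rw [Real.mul_rpow hb0.le (Real.rpow_nonneg hu0.le _), ← Real.rpow_mul hu0.le,
        one_div_mul_cancel hs.ne', Real.rpow_one]
    have hpow2 : (b * u ^ (1 / (1 - ξ))) ^ (2 - 2 * ξ) = (b ^ (1 - ξ) * u) ^ 2 := by
      rw [← hpow, ← Real.rpow_natCast, ← Real.rpow_mul hx0.le]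
      congr 1; push_cast; ring
    have hb1 : b ^ (1 + ξ) = b * b ^ ξ := by rw [Real.rpow_add hb0, Real.rpow_one]
    have hb2 : b ^ (2 * ξ) = b ^ ξ * b ^ ξ := by rw [two_mul, Real.rpow_add hb0]
    have hb3 : b ^ ξ * b ^ (1 - ξ) = b := by
      rw [← Real.rpow_add hb0, add_sub_cancel, Real.rpow_one]
    rw [hpow2, hpow, hb1, hb2]
    refine lt_of_eq_of_lt ?_ hx0
    linear_combination b ^ ξ * b ^ (1 - ξ) * u * hroot
      + γ * u ^ 2 * (b ^ ξ * b ^ (1 - ξ)) * hb3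
end

section
/- Let ξ ∈ (0,1) with ξ ≠ 1/2, and let a, c ∈ ℝ. Then the set {x ∈ (0,∞) : x^ξ = a + c·x^{1−ξ}} (real powers) has at most two elements. -/
/-!
The substitution `t = x ^ (1 - ξ)`, a strictly monotone bijection of the positive half-line, turns
the equation into `t ^ p = a + c * t` with `p = ξ / (1 - ξ)`. Since `0 < p` and `p ≠ 1`, the power
`t ^ p` is strictly convex or strictly concave, so its graph meets a line in at most two points
(`not_three_rpow_eq_line`).
-/

lemma not_three_rpow_eq_line {p a c u v w : ℝ} (hp : 0 < p) (hp1 : p ≠ 1) (hu : 0 < u)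
    (huv : u < v) (hvw : v < w) (eu : u ^ p = a + c * u) (ev : v ^ p = a + c * v)
    (ew : w ^ p = a + c * w) : False := by
  have slope₁ : (v ^ p - u ^ p) / (v - u) = c := by
    rw [eu, ev, div_eq_iff (by linarith)]; ring
  have slope₂ : (w ^ p - v ^ p) / (w - v) = c := by
    rw [ev, ew, div_eq_iff (by linarith)]; ring
  have mu : u ∈ Set.Ici (0 : ℝ) := hu.le
  have mw : w ∈ Set.Ici (0 : ℝ) := (hu.trans (huv.trans hvw)).le
  rcases lt_or_gt_of_ne hp1 with h | h
  · have := (Real.strictConcaveOn_rpow hp h).slope_anti_adjacent mu mw huv hvw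
    simp only [slope₁, slope₂, lt_irrefl] at this
  · have := (strictConvexOn_rpow h).slope_strict_mono_adjacent mu mw huv hvw
    simp only [slope₁, slope₂, lt_irrefl] at this

lemma not_three_ordered_solutions {ξ a c x y z : ℝ} (hξ : ξ ∈ Set.Ioo (0 : ℝ) 1)
    (hξ' : ξ ≠ 1 / 2) (hx : 0 < x) (hxy : x < y) (hyz : y < z)
    (ex : x ^ ξ = a + c * x ^ (1 - ξ)) (ey : y ^ ξ = a + c * y ^ (1 - ξ))
    (ez : z ^ ξ = a + c * z ^ (1 - ξ)) : False := by
  have hq : 0 < 1 - ξ := sub_pos.2 hξ.2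
  have hy : 0 < y := hx.trans hxy
  have key : ∀ t : ℝ, 0 < t → (t ^ (1 - ξ)) ^ (ξ / (1 - ξ)) = t ^ ξ := fun t ht => by
    rw [← Real.rpow_mul ht.le, mul_div_cancel₀ _ hq.ne']
  refine not_three_rpow_eq_line (p := ξ / (1 - ξ)) (a := a) (c := c) (div_pos hξ.1 hq) ?_
    (Real.rpow_pos_of_pos hx _) (Real.rpow_lt_rpow hx.le hxy hq) (Real.rpow_lt_rpow hy.le hyz hq)
    ((key x hx).trans ex) ((key y hy).trans ey) ((key z (hy.trans hyz)).trans ez)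
  intro h
  rw [div_eq_one_iff_eq hq.ne'] at h
  exact hξ' (by linarith)

/-- For `ξ ∈ (0,1)` with `ξ ≠ 1/2` and `a, c ∈ ℝ`, the set
`{x ∈ (0,∞) : x^ξ = a + c·x^(1−ξ)}` (real powers) has at most two elements. -/
theorem rpow_equation_at_most_two_solutions
    (ξ a c : ℝ) (hξ : ξ ∈ Set.Ioo (0 : ℝ) 1) (hξ' : ξ ≠ 1 / 2) :
    ∀ x y z : ℝ,
      x ∈ {x : ℝ | 0 < x ∧ x ^ ξ = a + c * x ^ (1 - ξ)} →
      y ∈ {x : ℝ | 0 < x ∧ x ^ ξ = a + c * x ^ (1 - ξ)} →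
      z ∈ {x : ℝ | 0 < x ∧ x ^ ξ = a + c * x ^ (1 - ξ)} →
      x = y ∨ x = z ∨ y = z := by
  rintro x y z ⟨hx, ex⟩ ⟨hy, ey⟩ ⟨hz, ez⟩
  by_contra! h
  obtain ⟨hxy, hxz, hyz⟩ := h
  rcases lt_or_gt_of_ne hxy with h₁ | h₁ <;> rcases lt_or_gt_of_ne hxz with h₂ | h₂ <;>
    rcases lt_or_gt_of_ne hyz with h₃ | h₃
  · exact not_three_ordered_solutions hξ hξ' hx h₁ h₃ ex ey ez
  · exact not_three_ordered_solutions hξ hξ' hx h₂ h₃ ex ez ey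
  · exact absurd (h₁.trans h₃) h₂.not_gt
  · exact not_three_ordered_solutions hξ hξ' hz h₂ h₁ ez ex ey
  · exact not_three_ordered_solutions hξ hξ' hy h₁ h₂ ey ex ez
  · exact absurd (h₁.trans h₂) h₃.not_gt
  · exact not_three_ordered_solutions hξ hξ' hy h₃ h₂ ey ez ex
  · exact not_three_ordered_solutions hξ hξ' hz h₃ h₁ ez ey ex
end

section
/- (Case 4 of the proof of Theorem 4.3.) Let ξ ∈ (0,1) with ξ ≠ 1/2, let c₅, c₆, c₇ ∈ ℝ, and define M : (0,∞) → ℝ by M(x) = c₅x^{1−ξ} + c₆ + c₇x^{2−2ξ} − x (real powers). If 0 < c < d and M'(c) = M'(d) = 0, then M is strictly monotone on [c, d]; in particular M(c) ≠ M(d), so M(c) and M(d) cannot both equal 0. -/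
/-!
Put `A = c₅ (1 - ξ)` and `B = c₇ (2 - 2ξ)`. For `x > 0` one has `x ^ ξ * M'(x) = A + B t - t ^ p`, where
`t = x ^ (1 - ξ)` and `p = ξ / (1 - ξ)`. Since `ξ ≠ 1/2` gives `p ≠ 1`, the power `t ^ p` is strictly
convex (`ξ > 1/2`) or strictly concave (`ξ < 1/2`) in `t`. The line `A + B t` meets its graph at the two
points coming from `c` and `d`, so it is a chord there and lies strictly on one side of the graph in
between. Hence `M'` has a constant strict sign on `(c, d)`.
-/

/-- A strictly convex function lies strictly below the line `A + B t` between two points where they meet. -/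
lemma StrictConvexOn.lt_chord {s : Set ℝ} {f : ℝ → ℝ} (hf : StrictConvexOn ℝ s f) {A B u v t : ℝ}
    (hu : u ∈ s) (hv : v ∈ s) (hut : u < t) (htv : t < v)
    (hfu : f u = A + B * u) (hfv : f v = A + B * v) : f t < A + B * t := by
  have ht : t ∈ openSegment ℝ u v := by
    rw [openSegment_eq_Ioo (hut.trans htv)]
    exact ⟨hut, htv⟩
  obtain ⟨a, b, ha, hb, hab, rfl⟩ := ht
  have h := hf.2 hu hv (hut.trans htv).ne ha hb hab
  simp only [smul_eq_mul] at h ⊢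
  rw [hfu, hfv] at h
  have e : a * (A + B * u) + b * (A + B * v) = A + B * (a * u + b * v) := by
    linear_combination A * hab
  linarith

/-- Case 4 of the proof of Theorem 4.3: for `ξ ∈ (0,1)`, `ξ ≠ 1/2` and
`M(x) = c₅x^(1−ξ) + c₆ + c₇x^(2−2ξ) − x` (real powers), if `0 < c < d` and
`M'(c) = M'(d) = 0`, then `M` is strictly monotone on `[c, d]`; in particular
`M(c) ≠ M(d)`, so `M(c)` and `M(d)` cannot both equal `0`. -/
theorem no_bounded_interval_equilibrium
    (ξ c₅ c₆ c₇ : ℝ) (hξ : ξ ∈ Set.Ioo (0 : ℝ) 1) (hξ' : ξ ≠ 1 / 2)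
    (M : ℝ → ℝ)
    (hM : ∀ x : ℝ, 0 < x → M x = c₅ * x ^ (1 - ξ) + c₆ + c₇ * x ^ (2 - 2 * ξ) - x)
    (c d : ℝ) (hc : 0 < c) (hcd : c < d)
    (hMc : deriv M c = 0) (hMd : deriv M d = 0) :
    (StrictMonoOn M (Set.Icc c d) ∨ StrictAntiOn M (Set.Icc c d)) ∧
      M c ≠ M d ∧ ¬(M c = 0 ∧ M d = 0) := by
  obtain ⟨h0, h1⟩ := hξ
  have h1' : 0 < 1 - ξ := by linarith
  have hd : 0 < d := hc.trans hcd
  set A := c₅ * (1 - ξ) with hA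
  set B := c₇ * (2 - 2 * ξ) with hB
  set p := ξ / (1 - ξ) with hp
  have hderiv : ∀ x : ℝ, 0 < x →
      HasDerivAt M (A * x ^ (-ξ) + B * x ^ (1 - 2 * ξ) - 1) x := by
    intro x hx
    have e1 := (Real.hasDerivAt_rpow_const (x := x) (p := 1 - ξ) (Or.inl hx.ne')).const_mul c₅
    have e2 := (Real.hasDerivAt_rpow_const (x := x) (p := 2 - 2 * ξ) (Or.inl hx.ne')).const_mul c₇
    have e := ((e1.add_const c₆).add e2).sub (hasDerivAt_id x)
    have hev : M =ᶠ[nhds x] fun x => c₅ * x ^ (1 - ξ) + c₆ + c₇ * x ^ (2 - 2 * ξ) - x := by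
      filter_upwards [lt_mem_nhds hx] with y hy using hM y hy
    refine (HasDerivAt.congr_of_eventuallyEq e hev).congr_deriv ?_
    rw [show 1 - ξ - 1 = -ξ by ring, show 2 - 2 * ξ - 1 = 1 - 2 * ξ by ring, hA, hB]
    ring
  have hfac : ∀ x : ℝ, 0 < x →
      x ^ ξ * deriv M x = A + B * x ^ (1 - ξ) - (x ^ (1 - ξ)) ^ p := by
    intro x hx
    have e1 : x ^ ξ * x ^ (-ξ) = 1 := by
      rw [← Real.rpow_add hx, add_neg_cancel, Real.rpow_zero]
    have e2 : x ^ ξ * x ^ (1 - 2 * ξ) = x ^ (1 - ξ) := by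
      rw [← Real.rpow_add hx]; congr 1; ring
    have e3 : (x ^ (1 - ξ)) ^ p = x ^ ξ := by
      rw [← Real.rpow_mul hx.le, hp, mul_div_cancel₀ _ h1'.ne']
    rw [(hderiv x hx).deriv, e3]
    linear_combination A * e1 + B * e2
  have hcont : ContinuousOn M (Set.Icc c d) := fun x hx =>
    (hderiv x (hc.trans_le hx.1)).continuousAt.continuousWithinAt
  have hu : (c ^ (1 - ξ)) ^ p = A + B * c ^ (1 - ξ) := by
    have h := hfac c hc
    rw [hMc] at h
    linarith
  have hv : (d ^ (1 - ξ)) ^ p = A + B * d ^ (1 - ξ) := by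
    have h := hfac d hd
    rw [hMd] at h
    linarith
  have hmain : StrictMonoOn M (Set.Icc c d) ∨ StrictAntiOn M (Set.Icc c d) := by
    rcases lt_or_gt_of_ne hξ' with hlt | hgt
    · right
      have hp1 : p < 1 := by rw [hp, div_lt_one h1']; linarith
      have hconv := (Real.strictConcaveOn_rpow (div_pos h0 h1') hp1).neg
      refine strictAntiOn_of_deriv_neg (convex_Icc c d) hcont fun x hx => ?_
      rw [interior_Icc] at hx
      have hx0 : 0 < x := hc.trans hx.1
      have hlt := hconv.lt_chord (A := -A) (B := -B) (Real.rpow_nonneg hc.le _)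
        (Real.rpow_nonneg hd.le _) (Real.rpow_lt_rpow hc.le hx.1 h1')
        (Real.rpow_lt_rpow hx0.le hx.2 h1')
        (by simp only [Pi.neg_apply]; rw [hu]; ring) (by simp only [Pi.neg_apply]; rw [hv]; ring)
      simp only [Pi.neg_apply] at hlt
      have h := hfac x hx0
      refine (pos_iff_neg_of_mul_neg (a := x ^ ξ) ?_).1 (Real.rpow_pos_of_pos hx0 _)
      linarith
    · left
      have hp1 : 1 < p := by rw [hp, one_lt_div h1']; linarith
      refine strictMonoOn_of_deriv_pos (convex_Icc c d) hcont fun x hx => ?_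
      rw [interior_Icc] at hx
      have hx0 : 0 < x := hc.trans hx.1
      have hlt := (strictConvexOn_rpow hp1).lt_chord (Real.rpow_nonneg hc.le _)
        (Real.rpow_nonneg hd.le _) (Real.rpow_lt_rpow hc.le hx.1 h1')
        (Real.rpow_lt_rpow hx0.le hx.2 h1') hu hv
      have h := hfac x hx0
      refine (pos_iff_pos_of_mul_pos (a := x ^ ξ) ?_).1 (Real.rpow_pos_of_pos hx0 _)
      linarith
  have hne : M c ≠ M d := by
    have hcm : c ∈ Set.Icc c d := Set.left_mem_Icc.2 hcd.le
    have hdm : d ∈ Set.Icc c d := Set.right_mem_Icc.2 hcd.le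
    rcases hmain with h | h
    · exact (h hcm hdm hcd).ne
    · exact (h hcm hdm hcd).ne'
  exact ⟨hmain, hne, fun h => hne (h.1.trans h.2.symm)⟩
end
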